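/- arXiv:2507.09252 — 2 statements merged into one kernel-verified Lean document; each statement's English description precedes it below -/
import Mathlib

section
/- Let μ be a σ-finite measure on a measurable space Ω, let p and q be probability densities with respect to μ, and let M > 0 satisfy p(x) ≤ M·q(x) for all x ∈ Ω. Let (τ̂, ε) be distributed according to the product of the probability measure with density q (with respect to μ) and the uniform distribution on [0,1], and let the acceptance event be {ε < p(τ̂)/(M·q(τ̂))} (ratio interpreted as 0 when q(x) = 0). Then for every measurable set A ⊆ Ω, the conditional probability that τ̂ ∈ A given the acceptance event equals ∫_A p dμ. In particular, the conditional law of the accepted sample is the probability measure with density p. -/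
open MeasureTheory

/-!
A proposal `x` is accepted with probability `p x / (M * q x)`, so accepted proposals have density
`q x * (p x / (M * q x)) = p x / M`, and the factor `1 / M` cancels when we condition on acceptance.
Where `q x = 0`, the ratio is `0` by convention and the bound `p x ≤ M * q x` forces `p x = 0`.
-/

lemma volume_restrict_Icc_zero_one_Iio (t : ℝ) :
    volume.restrict (Set.Icc (0 : ℝ) 1) (Set.Iio t) = ENNReal.ofReal (min 1 t) := by
  rw [measure_congr Iio_ae_eq_Iic, Measure.restrict_apply measurableSet_Iic, Set.inter_comm,
    ← Set.Ici_inter_Iic, Set.inter_assoc, Set.Iic_inter_Iic, Set.Ici_inter_Iic, Real.volume_Icc,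
    sub_zero]

lemma ofReal_mul_ofReal_min_one_div {a b M : ℝ} (hM : 0 < M) (hab : a ≤ M * b) :
    ENNReal.ofReal b * ENNReal.ofReal (min 1 (a / (M * b))) =
      ENNReal.ofReal M⁻¹ * ENNReal.ofReal a := by
  rcases le_or_gt b 0 with hb | hb
  · have ha : a ≤ 0 := hab.trans (mul_nonpos_of_nonneg_of_nonpos hM.le hb)
    simp only [ENNReal.ofReal_of_nonpos, ha, hb, zero_mul, mul_zero]
  · have h_ratio : a / (M * b) ≤ 1 := div_le_one_of_le₀ hab (mul_pos hM hb).le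
    rw [min_eq_right h_ratio, ← ENNReal.ofReal_mul hb.le, ← ENNReal.ofReal_mul (inv_pos.2 hM).le]
    congr 1
    field_simp

section Acceptance

variable {Ω : Type*} [MeasurableSpace Ω] {A : Set Ω}

lemma prod_volume_restrict_Icc_zero_one_mem_and_lt (ν : Measure Ω) {r : Ω → ℝ}
    (hr : Measurable r) (hA : MeasurableSet A) :
    (ν.prod (volume.restrict (Set.Icc (0 : ℝ) 1))) {ω : Ω × ℝ | ω.1 ∈ A ∧ ω.2 < r ω.1} =
      ∫⁻ x in A, ENNReal.ofReal (min 1 (r x)) ∂ν := by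
  have h_meas : MeasurableSet {ω : Ω × ℝ | ω.1 ∈ A ∧ ω.2 < r ω.1} :=
    (measurable_fst hA).inter (measurableSet_lt measurable_snd (hr.comp measurable_fst))
  rw [Measure.prod_apply h_meas, ← lintegral_indicator hA]
  refine lintegral_congr fun x => ?_
  by_cases hx : x ∈ A
  · rw [Set.indicator_of_mem hx, ← volume_restrict_Icc_zero_one_Iio]
    congr 1
    ext y
    simp [hx]
  · simp [hx]

variable {μ : Measure Ω} {p q : Ω → ℝ} {M : ℝ}

lemma measure_mem_and_accepted (hpm : Measurable p) (hqm : Measurable q) (hM : 0 < M)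
    (hbound : ∀ᵐ x ∂μ, p x ≤ M * q x) (hA : MeasurableSet A) :
    ((μ.withDensity fun x => ENNReal.ofReal (q x)).prod
        (volume.restrict (Set.Icc (0 : ℝ) 1)))
      {ω : Ω × ℝ | ω.1 ∈ A ∧ ω.2 < p ω.1 / (M * q ω.1)} =
      ENNReal.ofReal M⁻¹ * ∫⁻ x in A, ENNReal.ofReal (p x) ∂μ := by
  have h_ratio : Measurable fun x => p x / (M * q x) := hpm.div (hqm.const_mul M)
  calc
    _ = ∫⁻ x in A, ENNReal.ofReal (min 1 (p x / (M * q x)))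
          ∂(μ.withDensity fun x => ENNReal.ofReal (q x)) :=
      prod_volume_restrict_Icc_zero_one_mem_and_lt _ h_ratio hA
    _ = ∫⁻ x in A, ENNReal.ofReal (q x) * ENNReal.ofReal (min 1 (p x / (M * q x))) ∂μ :=
      setLIntegral_withDensity_eq_setLIntegral_mul μ hqm.ennreal_ofReal
        (measurable_const.min h_ratio).ennreal_ofReal hA
    _ = ∫⁻ x in A, ENNReal.ofReal M⁻¹ * ENNReal.ofReal (p x) ∂μ :=
      lintegral_congr_ae <| ae_restrict_of_ae <|
        hbound.mono fun _ hx => ofReal_mul_ofReal_min_one_div hM hx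
    _ = ENNReal.ofReal M⁻¹ * ∫⁻ x in A, ENNReal.ofReal (p x) ∂μ :=
      lintegral_const_mul _ hpm.ennreal_ofReal

theorem acceptance_rejection_conditional_law_general (hpm : Measurable p) (hqm : Measurable q)
    (hp0 : 0 ≤ᵐ[μ] p) (hp_pos : 0 < ∫ x, p x ∂μ)
    (hM : 0 < M) (hbound : ∀ᵐ x ∂μ, p x ≤ M * q x) (hA : MeasurableSet A) :
    ((μ.withDensity fun x => ENNReal.ofReal (q x)).prod
        (volume.restrict (Set.Icc (0 : ℝ) 1)))
      {ω : Ω × ℝ | ω.1 ∈ A ∧ ω.2 < p ω.1 / (M * q ω.1)}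
    / ((μ.withDensity fun x => ENNReal.ofReal (q x)).prod
        (volume.restrict (Set.Icc (0 : ℝ) 1)))
      {ω : Ω × ℝ | ω.2 < p ω.1 / (M * q ω.1)}
      = ENNReal.ofReal ((∫ x in A, p x ∂μ) / ∫ x, p x ∂μ) := by
  have hp_int : Integrable p μ := .of_integral_ne_zero hp_pos.ne'
  have h_accepted := measure_mem_and_accepted hpm hqm hM hbound MeasurableSet.univ
  simp only [Set.mem_univ, true_and, Measure.restrict_univ] at h_accepted
  have hM_inv : ENNReal.ofReal M⁻¹ ≠ 0 := (ENNReal.ofReal_pos.2 (inv_pos.2 hM)).ne'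
  rw [measure_mem_and_accepted hpm hqm hM hbound hA, h_accepted,
    ENNReal.mul_div_mul_left _ _ hM_inv ENNReal.ofReal_ne_top, ENNReal.ofReal_div_of_pos hp_pos,
    ofReal_integral_eq_lintegral_ofReal hp_int.integrableOn (ae_restrict_of_ae hp0),
    ofReal_integral_eq_lintegral_ofReal hp_int hp0]

end Acceptance

/-- Acceptance-rejection sampling: the conditional law of the accepted sample is the
probability measure with density `p`. -/
theorem acceptance_rejection_conditional_law
    {Ω : Type*} [MeasurableSpace Ω] (μ : Measure Ω) [SigmaFinite μ]
    (p q : Ω → ℝ) (hpm : Measurable p) (hqm : Measurable q)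
    (hp0 : ∀ x, 0 ≤ p x) (hq0 : ∀ x, 0 ≤ q x)
    (hp1 : ∫ x, p x ∂μ = 1) (hq1 : ∫ x, q x ∂μ = 1)
    (M : ℝ) (hM : 0 < M) (hbound : ∀ x, p x ≤ M * q x)
    (A : Set Ω) (hA : MeasurableSet A) :
    ((μ.withDensity fun x => ENNReal.ofReal (q x)).prod
        (volume.restrict (Set.Icc (0 : ℝ) 1)))
      {ω : Ω × ℝ | ω.1 ∈ A ∧ ω.2 < p ω.1 / (M * q ω.1)}
    / ((μ.withDensity fun x => ENNReal.ofReal (q x)).prod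
        (volume.restrict (Set.Icc (0 : ℝ) 1)))
      {ω : Ω × ℝ | ω.2 < p ω.1 / (M * q ω.1)}
      = ENNReal.ofReal (∫ x in A, p x ∂μ) := by
  simpa only [hp1, div_one] using acceptance_rejection_conditional_law_general hpm hqm
    (ae_of_all μ hp0) (by simp [hp1]) hM (ae_of_all μ hbound) hA
end

section
/- Let K be a finite type, let f_T and f_D be probability mass functions on K, let β := ∑_{k ∈ K} min(f_T(k), f_D(k)), assume β < 1, and define f'(k) := max(0, f_T(k) − f_D(k))/(1 − β). On the product probability space K × [0,1] × K carrying the product of the f_D-distribution, the uniform distribution on [0,1], and the f'-distribution, define the output Y(z, ε, z') := z if ε < min(1, f_T(z)/f_D(z)) (ratio interpreted as 0 when f_D(z) = 0) and Y(z, ε, z') := z' otherwise. Then for every k ∈ K, P(Y = k) = f_T(k); that is, the speculative-decoding procedure for event types outputs samples distributed exactly according to the target probability mass function f_T. -/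
open MeasureTheory

/-!
Let `p` be the target density, `q` the draft density and `r` the adjusted one. Given the proposal
`z`, the output is `z` with probability `a z = min 1 (p z / q z)` and a fresh sample from `r` with
probability `1 - a z`, so the output has density `q * a + (1 - ∫ q * a) • r`. Since
`q * a = min p q`, the first term is the overlap of the two densities, of mass `β`, and the second
is `(1 - β) • r = max 0 (p - q)`, exactly what the overlap lacks from `p`. This is an identity of
densities with respect to any s-finite measure; the discrete law is the case of counting measure.
-/

theorem mul_min_one_div_eq_min {𝕜 : Type*} [Semifield 𝕜] [LinearOrder 𝕜] [IsStrictOrderedRing 𝕜]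
    {p q : 𝕜} (hp : 0 ≤ p) (hq : 0 ≤ q) : q * min 1 (p / q) = min p q := by
  rcases hq.eq_or_lt with rfl | hq'
  · simp [hp]
  · rw [mul_min_of_nonneg _ _ hq, mul_one, mul_div_cancel₀ _ hq'.ne', min_comm]

theorem min_add_max_zero_sub {G : Type*} [AddCommGroup G] [LinearOrder G] [IsOrderedAddMonoid G]
    (p q : G) : min p q + max 0 (p - q) = p := by
  rcases le_total p q with h | h <;> simp [h]

theorem volume_restrict_Icc_Iio {a : ℝ} (ha : a ≤ 1) :
    volume.restrict (Set.Icc (0 : ℝ) 1) (Set.Iio a) = ENNReal.ofReal a := by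
  have inter_eq : Set.Iio a ∩ Set.Icc 0 1 = Set.Ico 0 a := by grind
  rw [Measure.restrict_apply measurableSet_Iio, inter_eq, Real.volume_Ico, sub_zero]

theorem volume_restrict_Icc_Ici {a : ℝ} (ha : 0 ≤ a) :
    volume.restrict (Set.Icc (0 : ℝ) 1) (Set.Ici a) = ENNReal.ofReal (1 - a) := by
  have inter_eq : Set.Ici a ∩ Set.Icc 0 1 = Set.Icc a 1 := by grind
  rw [Measure.restrict_apply measurableSet_Ici, inter_eq, Real.volume_Icc]

section AcceptOrResample

variable {K : Type*}

/-- The output of one accept/reject step on a proposal `ω.1`, a threshold `ω.2.1` and a replacement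
`ω.2.2`: the proposal if the threshold is below its acceptance probability `a ω.1`, and the
replacement otherwise. -/
noncomputable def acceptOrResample (a : K → ℝ) (ω : K × ℝ × K) : K :=
  if ω.2.1 < a ω.1 then ω.1 else ω.2.2

variable [MeasurableSpace K] {a : K → ℝ}

theorem measurable_acceptOrResample (ha : Measurable a) : Measurable (acceptOrResample a) :=
  Measurable.ite (measurableSet_lt (by fun_prop) (by fun_prop)) (by fun_prop) (by fun_prop)

theorem prod_acceptOrResample_slice (ρ : Measure K) [SFinite ρ] {z : K} {S : Set K}
    (h0 : 0 ≤ a z) (h1 : a z ≤ 1) (hS : MeasurableSet S) :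
    ((volume.restrict (Set.Icc (0 : ℝ) 1)).prod ρ) (Prod.mk z ⁻¹' (acceptOrResample a ⁻¹' S)) =
      ρ Set.univ * S.indicator (fun z => ENNReal.ofReal (a z)) z +
        ENNReal.ofReal (1 - a z) * ρ S := by
  have slice_eq : Prod.mk z ⁻¹' (acceptOrResample a ⁻¹' S) =
      Set.Iio (a z) ×ˢ {_z' | z ∈ S} ∪ Set.Ici (a z) ×ˢ S := by
    ext ⟨e, z'⟩
    by_cases he : e < a z <;> simp [acceptOrResample, he, not_le, not_lt.mp]
  have disjoint_pieces : Disjoint (Set.Iio (a z) ×ˢ {_z' : K | z ∈ S}) (Set.Ici (a z) ×ˢ S) :=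
    Set.disjoint_prod.mpr (.inl (Set.Iio_disjoint_Ici le_rfl))
  rw [slice_eq, measure_union disjoint_pieces (measurableSet_Ici.prod hS), Measure.prod_prod,
    Measure.prod_prod, volume_restrict_Icc_Iio h1, volume_restrict_Icc_Ici h0]
  by_cases hz : z ∈ S <;> simp [hz, mul_comm]

theorem map_acceptOrResample (ν ρ : Measure K) [SFinite ν] [SFinite ρ] (ha : Measurable a)
    (h0 : ∀ z, 0 ≤ a z) (h1 : ∀ z, a z ≤ 1) :
    (ν.prod ((volume.restrict (Set.Icc (0 : ℝ) 1)).prod ρ)).map (acceptOrResample a) =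
      ρ Set.univ • ν.withDensity (fun z => ENNReal.ofReal (a z)) +
        (∫⁻ z, ENNReal.ofReal (1 - a z) ∂ν) • ρ := by
  ext S hS
  have hY := measurable_acceptOrResample ha
  rw [Measure.map_apply hY hS, Measure.prod_apply (hY hS)]
  simp_rw [prod_acceptOrResample_slice ρ (h0 _) (h1 _) hS]
  rw [lintegral_add_right _ (by fun_prop), lintegral_const_mul _ (ha.ennreal_ofReal.indicator hS),
    lintegral_indicator hS, lintegral_mul_const _ (by fun_prop)]
  simp [withDensity_apply _ hS]

end AcceptOrResample

section Densities

variable {K : Type*} [MeasurableSpace K]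

/-- The common mass `β` of two densities `p` and `q` with respect to `μ`; for densities of
probability measures, `1 - β` is their total variation distance. -/
noncomputable def densityOverlap (μ : Measure K) (p q : K → ℝ) : ℝ :=
  ∫ x, min (p x) (q x) ∂μ

/-- The adjusted density `f'` from which a replacement is drawn after a rejection, for target
density `p` and draft density `q`. It is the junk value `0` when `densityOverlap μ p q = 1`. -/
noncomputable def residualDensity (μ : Measure K) (p q : K → ℝ) (x : K) : ℝ :=
  max 0 (p x - q x) / (1 - densityOverlap μ p q)

variable {μ : Measure K} {p q : K → ℝ}

theorem withDensity_ofReal_mul (hp : Measurable p) (hq : Measurable q) (hp0 : ∀ x, 0 ≤ p x) :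
    (μ.withDensity fun x => ENNReal.ofReal (p x)).withDensity (fun x => ENNReal.ofReal (q x)) =
      μ.withDensity fun x => ENNReal.ofReal (p x * q x) := by
  rw [← withDensity_mul _ hp.ennreal_ofReal hq.ennreal_ofReal]
  simp_rw [ENNReal.ofReal_mul (hp0 _)]
  rfl

theorem withDensity_ofReal_apply_univ (hp : Integrable p μ) (hp0 : 0 ≤ᵐ[μ] p) :
    (μ.withDensity fun x => ENNReal.ofReal (p x)) Set.univ = ENNReal.ofReal (∫ x, p x ∂μ) := by
  rw [withDensity_apply _ .univ, setLIntegral_univ,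
    ofReal_integral_eq_lintegral_ofReal hp hp0]

theorem integral_max_zero_sub (hp : Integrable p μ) (hq : Integrable q μ) :
    ∫ x, max 0 (p x - q x) ∂μ = ∫ x, p x ∂μ - densityOverlap μ p q :=
  calc ∫ x, max 0 (p x - q x) ∂μ = ∫ x, (p x - min (p x) (q x)) ∂μ :=
        integral_congr_ae (.of_forall fun _ => eq_sub_of_add_eq' (min_add_max_zero_sub _ _))
    _ = ∫ x, p x ∂μ - densityOverlap μ p q := integral_sub hp (hp.inf hq)

theorem withDensity_residualDensity_apply_univ (hp : Integrable p μ) (hq : Integrable q μ)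
    (hp1 : ∫ x, p x ∂μ = 1) (hβ : densityOverlap μ p q < 1) :
    (μ.withDensity fun x => ENNReal.ofReal (residualDensity μ p q x)) Set.univ = 1 := by
  have integrable_residual : Integrable (residualDensity μ p q) μ :=
    ((integrable_zero K ℝ μ).sup (hp.sub hq)).div_const _
  have residual_nonneg : ∀ x, 0 ≤ residualDensity μ p q x := fun _ =>
    div_nonneg (le_max_left _ _) (sub_pos.mpr hβ).le
  have integral_residual : ∫ x, residualDensity μ p q x ∂μ = 1 := by
    simp_rw [residualDensity]
    rw [integral_div, integral_max_zero_sub hp hq, hp1, div_self (sub_pos.mpr hβ).ne']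
  rw [withDensity_ofReal_apply_univ integrable_residual (.of_forall residual_nonneg),
    integral_residual, ENNReal.ofReal_one]

theorem smul_withDensity_residualDensity (hβ : densityOverlap μ p q < 1) :
    ENNReal.ofReal (1 - densityOverlap μ p q) •
        μ.withDensity (fun x => ENNReal.ofReal (residualDensity μ p q x)) =
      μ.withDensity fun x => ENNReal.ofReal (max 0 (p x - q x)) := by
  rw [← withDensity_smul' _ _ ENNReal.ofReal_ne_top]
  congr with x
  rw [Pi.smul_apply, smul_eq_mul, ← ENNReal.ofReal_mul (sub_pos.mpr hβ).le, residualDensity,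
    mul_div_cancel₀ _ (sub_pos.mpr hβ).ne']

theorem withDensity_ofReal_min_one_div (hp : Measurable p) (hq : Measurable q) (hp0 : ∀ x, 0 ≤ p x)
    (hq0 : ∀ x, 0 ≤ q x) :
    (μ.withDensity fun x => ENNReal.ofReal (q x)).withDensity
        (fun x => ENNReal.ofReal (min 1 (p x / q x))) =
      μ.withDensity fun x => ENNReal.ofReal (min (p x) (q x)) := by
  rw [withDensity_ofReal_mul hq (by fun_prop) hq0]
  simp_rw [mul_min_one_div_eq_min (hp0 _) (hq0 _)]

theorem lintegral_one_sub_min_one_div (hp : Measurable p) (hq : Measurable q) (hp0 : ∀ x, 0 ≤ p x)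
    (hq0 : ∀ x, 0 ≤ q x) (hpi : Integrable p μ) (hqi : Integrable q μ) :
    ∫⁻ x, ENNReal.ofReal (1 - min 1 (p x / q x)) ∂(μ.withDensity fun x => ENNReal.ofReal (q x)) =
      ENNReal.ofReal (∫ x, q x ∂μ - densityOverlap μ p q) := by
  have draft_mul_reject : ∀ x, q x * (1 - min 1 (p x / q x)) = q x - min (p x) (q x) := by
    intro x
    rw [mul_sub, mul_one, mul_min_one_div_eq_min (hp0 x) (hq0 x)]
  have integrable_min : Integrable (fun x => min (p x) (q x)) μ := hpi.inf hqi
  calc _ = ((μ.withDensity fun x => ENNReal.ofReal (q x)).withDensity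
          fun x => ENNReal.ofReal (1 - min 1 (p x / q x))) Set.univ := by
        rw [withDensity_apply _ .univ, setLIntegral_univ]
    _ = (μ.withDensity fun x => ENNReal.ofReal (q x - min (p x) (q x))) Set.univ := by
        rw [withDensity_ofReal_mul hq (by fun_prop) hq0]
        simp_rw [draft_mul_reject]
    _ = ENNReal.ofReal (∫ x, (q x - min (p x) (q x)) ∂μ) :=
        withDensity_ofReal_apply_univ (hqi.sub integrable_min)
          (.of_forall fun _ => sub_nonneg.mpr (min_le_right _ _))
    _ = ENNReal.ofReal (∫ x, q x ∂μ - densityOverlap μ p q) := by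
        rw [integral_sub hqi integrable_min, densityOverlap]

end Densities

theorem discrete_speculative_decoding_output_law_general
    {K : Type*} [MeasurableSpace K] (μ : Measure K) [SFinite μ] {p q : K → ℝ}
    (hp : Measurable p) (hq : Measurable q) (hp0 : ∀ x, 0 ≤ p x) (hq0 : ∀ x, 0 ≤ q x)
    (hp1 : ∫ x, p x ∂μ = 1) (hq1 : ∫ x, q x ∂μ = 1) (hβ : densityOverlap μ p q < 1) :
    ((μ.withDensity fun x => ENNReal.ofReal (q x)).prod
      ((volume.restrict (Set.Icc (0 : ℝ) 1)).prod
        (μ.withDensity fun x => ENNReal.ofReal (residualDensity μ p q x)))).map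
        (acceptOrResample fun x => min 1 (p x / q x)) =
      μ.withDensity fun x => ENNReal.ofReal (p x) := by
  have hpi := integrable_of_integral_eq_one hp1
  have hqi := integrable_of_integral_eq_one hq1
  calc _ = _ := map_acceptOrResample _ _ (by fun_prop)
        (fun x => le_min zero_le_one (div_nonneg (hp0 x) (hq0 x))) (fun _ => min_le_left _ _)
    _ = μ.withDensity (fun x => ENNReal.ofReal (min (p x) (q x))) +
          ENNReal.ofReal (1 - densityOverlap μ p q) •
            μ.withDensity (fun x => ENNReal.ofReal (residualDensity μ p q x)) := by
        rw [withDensity_residualDensity_apply_univ hpi hqi hp1 hβ, one_smul,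
          withDensity_ofReal_min_one_div hp hq hp0 hq0,
          lintegral_one_sub_min_one_div hp hq hp0 hq0 hpi hqi, hq1]
    _ = μ.withDensity (fun x => ENNReal.ofReal (min (p x) (q x))) +
          μ.withDensity (fun x => ENNReal.ofReal (max 0 (p x - q x))) := by
        rw [smul_withDensity_residualDensity hβ]
    _ = μ.withDensity fun x => ENNReal.ofReal (p x) := by
        rw [← withDensity_add_left (by fun_prop)]
        congr with x
        rw [Pi.add_apply, ← ENNReal.ofReal_add (le_min (hp0 x) (hq0 x)) (le_max_left _ _),
          min_add_max_zero_sub]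

/-- One-step speculative decoding for event types: propose `z ~ f_D`, accept with
probability `min(1, f_T(z)/f_D(z))`, otherwise resample `z'` from the adjusted pmf `f'`.
The output is distributed exactly according to the target pmf `f_T`. -/
theorem discrete_speculative_decoding_output_law
    {K : Type*} [Fintype K] [MeasurableSpace K] [MeasurableSingletonClass K]
    (fT fD : K → ℝ) (hT0 : ∀ k, 0 ≤ fT k) (hD0 : ∀ k, 0 ≤ fD k)
    (hT1 : ∑ k, fT k = 1) (hD1 : ∑ k, fD k = 1)
    (β : ℝ) (hβ : β = ∑ k, min (fT k) (fD k)) (hβ1 : β < 1)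
    (f' : K → ℝ) (hf' : ∀ k, f' k = max 0 (fT k - fD k) / (1 - β)) :
    ∀ k : K,
      ((Measure.count.withDensity fun j => ENNReal.ofReal (fD j)).prod
        ((volume.restrict (Set.Icc (0 : ℝ) 1)).prod
          (Measure.count.withDensity fun j => ENNReal.ofReal (f' j))))
        {ω : K × ℝ × K |
          (if ω.2.1 < min 1 (fT ω.1 / fD ω.1) then ω.1 else ω.2.2) = k}
        = ENNReal.ofReal (fT k) := by
  intro k
  obtain rfl : β = densityOverlap Measure.count fT fD := hβ.trans (integral_count _).symm
  obtain rfl : f' = residualDensity Measure.count fT fD := funext hf'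
  have law := discrete_speculative_decoding_output_law_general Measure.count
    (measurable_of_finite fT) (measurable_of_finite fD) hT0 hD0 (by simpa) (by simpa) hβ1
  have output_measurable : Measurable (acceptOrResample fun z => min 1 (fT z / fD z)) :=
    measurable_acceptOrResample (measurable_of_finite _)
  exact (Measure.map_apply output_measurable (measurableSet_singleton k)).symm.trans
    (by rw [law]; simp)
end
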